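/- Let θ : 𝕋ⁿ → ℝⁿ be C¹ with sup_x |∂_x θ(x)| ≤ 0.99 (Hilbert–Schmidt norm of the Jacobian). Define Θ(τ,x) = τ e^{−(1−τ)⟨D_x⟩} θ(x) for τ ∈ [0,1], where e^{−t⟨D_x⟩} is the Fourier multiplier with symbol e^{−t⟨ξ⟩}, ⟨ξ⟩ = (1+|ξ|²)^{1/2}. Then for every τ ∈ [0,1], sup_x |∂_x Θ(τ,x)| ≤ sup_x |∂_x θ(x)| ≤ 0.99, and consequently for each τ the map x ↦ x + Θ(τ,x) is a C¹ diffeomorphism of 𝕋ⁿ. -/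

import Mathlib

/-- Partial derivative of a scalar function on ℝⁿ. -/
noncomputable def pd {n : ℕ} (f : (Fin n → ℝ) → ℝ) (i : Fin n) (x : Fin n → ℝ) : ℝ :=
  deriv (fun s => f (Function.update x i s)) (x i)

noncomputable def om {n : ℕ} (ξ : Fin n → ℤ) : ℝ := Real.sqrt (1 + ∑ i, ((ξ i : ℝ)) ^ 2)
noncomputable def dt {n : ℕ} (ξ : Fin n → ℤ) (x : Fin n → ℝ) : ℝ := ∑ i, (ξ i : ℝ) * x i

lemma om_sq {n : ℕ} (ξ : Fin n → ℤ) : om ξ ^ 2 = 1 + ∑ i, ((ξ i : ℝ)) ^ 2 :=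
  Real.sq_sqrt (by positivity)
lemma one_le_om {n : ℕ} (ξ : Fin n → ℤ) : 1 ≤ om ξ := by
  rw [om, Real.one_le_sqrt]
  have : 0 ≤ ∑ i, ((ξ i : ℝ)) ^ 2 := by positivity
  linarith
lemma dt_add_single {n : ℕ} (ξ : Fin n → ℤ) (x : Fin n → ℝ) (i : Fin n) (s : ℝ) :
    dt ξ (x + s • Pi.single i 1) = dt ξ x + s * ξ i := by
  simp only [dt, Pi.add_apply, Pi.smul_apply, mul_add, Finset.sum_add_distrib, smul_eq_mul]
  congr 1
  rw [Finset.sum_eq_single i]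
  · simp; ring
  · intro b _ hb; simp [hb]
  · simp
lemma dt_add_per {n : ℕ} (ξ k : Fin n → ℤ) (x : Fin n → ℝ) :
    dt ξ (x + fun i => 2 * Real.pi * (k i : ℝ)) = dt ξ x + (∑ i, ξ i * k i : ℤ) * (2 * Real.pi) := by
  simp only [dt, Pi.add_apply, mul_add, Finset.sum_add_distrib]
  congr 1
  push_cast
  rw [Finset.sum_mul]
  exact Finset.sum_congr rfl fun i _ => by ring

lemma exists_per {n : ℕ} (x : Fin n → ℝ) : ∃ k : Fin n → ℤ,
    (x + fun i => 2 * Real.pi * (k i : ℝ)) ∈ Set.Icc (0 : Fin n → ℝ) (fun _ => 2 * Real.pi) := by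
  refine ⟨fun i => -⌊x i / (2 * Real.pi)⌋, ?_, ?_⟩
  all_goals
    intro i
    have hp : 0 < 2 * Real.pi := by positivity
    have h1 := Int.floor_le (x i / (2 * Real.pi))
    have h2 := Int.lt_floor_add_one (x i / (2 * Real.pi))
    rw [le_div_iff₀ hp] at h1
    rw [div_lt_iff₀ hp] at h2
    simp
    nlinarith

lemma second_deriv_test (f f' : ℝ → ℝ) (d s0 : ℝ) (hf : ∀ s, HasDerivAt f (f' s) s)
    (hf' : HasDerivAt f' d s0) (hm : IsLocalMax f s0) : d ≤ 0 := by
  by_contra hd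
  push Not at hd
  have e : deriv f = f' := funext fun s => (hf s).deriv
  have h2 : IsLocalMin f s0 := isLocalMin_of_deriv_deriv_pos (by rw [e, hf'.deriv]; exact hd)
    hm.deriv_eq_zero (hf s0).continuousAt
  have h3 : f =ᶠ[nhds s0] fun _ => f s0 := by
    filter_upwards [hm, h2] with s a b
    exact le_antisymm a b
  have h4 := h3.deriv
  have h5 : f' =ᶠ[nhds s0] fun _ => 0 := by
    rw [← e]; simpa using h4
  have := h5.deriv_eq
  rw [hf'.deriv] at this
  simp at this
  linarith

noncomputable def uu {n : ℕ} (S : Finset (Fin n → ℤ)) (A B : (Fin n → ℤ) → ℝ) (t : ℝ)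
    (x : Fin n → ℝ) : ℝ :=
  ∑ ξ ∈ S, Real.exp (-(t * om ξ)) * (A ξ * Real.cos (dt ξ x) - B ξ * Real.sin (dt ξ x))

lemma uu_per {n : ℕ} (S : Finset (Fin n → ℤ)) (A B : (Fin n → ℤ) → ℝ) (t : ℝ)
    (x : Fin n → ℝ) (k : Fin n → ℤ) :
    uu S A B t (x + fun i => 2 * Real.pi * (k i : ℝ)) = uu S A B t x := by
  unfold uu
  refine Finset.sum_congr rfl fun ξ _ => ?_
  rw [dt_add_per, Real.cos_add_int_mul_two_pi, Real.sin_add_int_mul_two_pi]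

lemma uu_tt {n : ℕ} (S : Finset (Fin n → ℤ)) (A B : (Fin n → ℤ) → ℝ) (t0 : ℝ)
    (x : Fin n → ℝ) (hm : IsLocalMax (fun t => uu S A B t x) t0) :
    ∑ ξ ∈ S, om ξ ^ 2 * (Real.exp (-(t0 * om ξ)) *
      (A ξ * Real.cos (dt ξ x) - B ξ * Real.sin (dt ξ x))) ≤ 0 := by
  have key : ∀ (ξ : Fin n → ℤ) s, HasDerivAt (fun t : ℝ => Real.exp (-(t * om ξ)))
      (-om ξ * Real.exp (-(s * om ξ))) s := fun ξ s => by
    have := (((hasDerivAt_id s).mul_const (om ξ)).neg).exp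
    simpa [mul_comm] using this
  refine second_deriv_test _ (fun t => ∑ ξ ∈ S, (-om ξ * Real.exp (-(t * om ξ))) *
      (A ξ * Real.cos (dt ξ x) - B ξ * Real.sin (dt ξ x))) _ t0 (fun s => ?_) ?_ hm
  · exact HasDerivAt.fun_sum fun ξ _ => (key ξ s).mul_const _
  · refine HasDerivAt.fun_sum fun ξ _ => ?_
    refine (((key ξ t0).const_mul (-om ξ)).mul_const
      (A ξ * Real.cos (dt ξ x) - B ξ * Real.sin (dt ξ x))).congr_deriv ?_
    ring

lemma uu_xx {n : ℕ} (S : Finset (Fin n → ℤ)) (A B : (Fin n → ℤ) → ℝ) (t : ℝ)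
    (x : Fin n → ℝ) (i : Fin n)
    (hm : IsLocalMax (fun s : ℝ => uu S A B t (x + s • Pi.single i 1)) 0) :
    ∑ ξ ∈ S, (-(ξ i : ℝ) ^ 2) * (Real.exp (-(t * om ξ)) *
      (A ξ * Real.cos (dt ξ x) - B ξ * Real.sin (dt ξ x))) ≤ 0 := by
  have kl : ∀ (ξ : Fin n → ℤ) (s : ℝ), HasDerivAt (fun s : ℝ => dt ξ x + s * ξ i) (ξ i) s :=
    fun ξ s => by simpa using ((hasDerivAt_id s).mul_const (ξ i : ℝ)).const_add (dt ξ x)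
  refine second_deriv_test _ (fun s => ∑ ξ ∈ S, Real.exp (-(t * om ξ)) *
      (A ξ * (-Real.sin (dt ξ x + s * ξ i) * ξ i) - B ξ * (Real.cos (dt ξ x + s * ξ i) * ξ i)))
      _ 0 (fun s => ?_) ?_ hm
  · simp only [uu, dt_add_single]
    exact HasDerivAt.fun_sum fun ξ _ =>
      (((kl ξ s).cos.const_mul _).sub ((kl ξ s).sin.const_mul _)).const_mul _
  · refine HasDerivAt.fun_sum fun ξ _ => ?_
    refine (((((kl ξ 0).sin.fun_neg.mul_const (ξ i : ℝ)).const_mul (A ξ)).fun_sub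
        (((kl ξ 0).cos.mul_const (ξ i : ℝ)).const_mul (B ξ))).const_mul
        (Real.exp (-(t * om ξ)))).congr_deriv ?_
    simp only [zero_mul, add_zero]
    ring

lemma max_finite {n : ℕ} (S : Finset (Fin n → ℤ)) (A B : (Fin n → ℤ) → ℝ) (M : ℝ) (hM : 0 ≤ M)
    (h0 : ∀ x, uu S A B 0 x ≤ M) (t : ℝ) (ht : 0 ≤ t) (x : Fin n → ℝ) : uu S A B t x ≤ M := by
  by_contra hcon
  push Not at hcon
  set C := ∑ ξ ∈ S, (|A ξ| + |B ξ|) with hC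
  have hC0 : 0 ≤ C := by positivity
  have bd : ∀ t x, 0 ≤ t → uu S A B t x ≤ Real.exp (-t) * C := fun t x ht => by
    rw [hC, Finset.mul_sum]
    refine Finset.sum_le_sum fun ξ _ => ?_
    have h1 : A ξ * Real.cos (dt ξ x) - B ξ * Real.sin (dt ξ x) ≤ |A ξ| + |B ξ| := by
      have a1 : |A ξ * Real.cos (dt ξ x)| ≤ |A ξ| := by
        rw [abs_mul]; exact mul_le_of_le_one_right (abs_nonneg _) (Real.abs_cos_le_one _)
      have a2 : |B ξ * Real.sin (dt ξ x)| ≤ |B ξ| := by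
        rw [abs_mul]; exact mul_le_of_le_one_right (abs_nonneg _) (Real.abs_sin_le_one _)
      linarith [le_abs_self (A ξ * Real.cos (dt ξ x)), neg_abs_le (B ξ * Real.sin (dt ξ x))]
    calc _ ≤ Real.exp (-(t * om ξ)) * (|A ξ| + |B ξ|) := by gcongr
      _ ≤ _ := by
        gcongr
        nlinarith [one_le_om ξ]
  have hpos : 0 < uu S A B t x := hM.trans_lt hcon
  obtain ⟨T, hT1, hT2⟩ : ∃ T, t < T ∧ Real.exp (-T) * C < uu S A B t x := by
    have : Filter.Tendsto (fun T => Real.exp (-T) * C) Filter.atTop (nhds (0 * C)) :=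
      (Real.tendsto_exp_neg_atTop_nhds_zero).mul_const C
    rw [zero_mul] at this
    exact ((Filter.eventually_gt_atTop t).and (this.eventually_lt_const hpos)).exists
  have hcont : Continuous (fun p : ℝ × (Fin n → ℝ) => uu S A B p.1 p.2) := by
    unfold uu dt; fun_prop
  set K : Set (ℝ × (Fin n → ℝ)) := Set.Icc 0 T ×ˢ Set.Icc (0 : Fin n → ℝ) (fun _ => 2 * Real.pi)
  have hK : IsCompact K := isCompact_Icc.prod isCompact_Icc
  obtain ⟨k, hk⟩ := exists_per x
  obtain ⟨⟨t0, x0⟩, hmem, hmax⟩ := hK.exists_isMaxOn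
    ⟨(t, _), ⟨ht, hT1.le⟩, hk⟩ hcont.continuousOn
  have hmax' : ∀ s y, 0 ≤ s → s ≤ T → uu S A B s y ≤ uu S A B t0 x0 := fun s y h1 h2 => by
    obtain ⟨k, hk⟩ := exists_per y
    have := hmax (show (s, _) ∈ K from ⟨⟨h1, h2⟩, hk⟩)
    simpa [uu_per] using this
  have hge := hmax' t x ht hT1.le
  have ht0 : 0 < t0 := by
    rcases hmem.1.1.lt_or_eq with h | h
    · exact h
    · simp only at h; subst h; linarith [h0 x0]
  have htT : t0 < T := by
    rcases hmem.1.2.lt_or_eq with h | h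
    · exact h
    · simp only at h; subst h; linarith [bd t0 x0 ht0.le]
  have e1 := uu_tt S A B t0 x0 (by
    filter_upwards [Ioo_mem_nhds ht0 htT] with s hs
    exact hmax' s x0 hs.1.le hs.2.le)
  have e2 := fun i => uu_xx S A B t0 x0 i (by
    refine Filter.Eventually.of_forall fun s => ?_
    simpa using hmax' t0 _ ht0.le htT.le)
  have e3 : uu S A B t0 x0 ≤ 0 := by
    have := add_nonpos e1 (Finset.sum_nonpos fun i (_ : i ∈ Finset.univ) => e2 i)
    rw [Finset.sum_comm, ← Finset.sum_add_distrib] at this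
    refine le_of_eq_of_le ?_ this
    refine Finset.sum_congr rfl fun ξ _ => ?_
    rw [← Finset.sum_mul, ← add_mul, om_sq, Finset.sum_neg_distrib]
    ring
  linarith

lemma tail_bound {n : ℕ} (b g : (Fin n → ℤ) → ℂ) (hb : Summable fun ξ => ‖b ξ‖)
    (hg : ∀ ξ, ‖g ξ‖ ≤ ‖b ξ‖) (S : Finset (Fin n → ℤ)) :
    |(∑' ξ, g ξ).re - (∑ ξ ∈ S, g ξ).re| ≤ ∑' ξ : {ξ // ξ ∉ S}, ‖b ξ‖ := by
  have hgn : Summable fun ξ => ‖g ξ‖ := hb.of_nonneg_of_le (fun _ => norm_nonneg _) hg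
  have hgs : Summable g := hgn.of_norm
  have e := hgs.sum_add_tsum_subtype_compl S
  rw [← Complex.sub_re]
  refine (Complex.abs_re_le_norm _).trans ?_
  rw [← e, add_sub_cancel_left]
  have h1 : Summable fun ξ : {ξ // ξ ∉ S} => ‖g ξ‖ := hgn.subtype _
  have h2 : Summable fun ξ : {ξ // ξ ∉ S} => ‖b ξ‖ := hb.subtype _
  exact (norm_tsum_le_tsum_norm h1).trans (h1.tsum_le_tsum (fun ξ => hg ξ) h2)

noncomputable def ee {n : ℕ} (ξ : Fin n → ℤ) (x : Fin n → ℝ) : ℂ :=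
  Complex.exp (Complex.I * (dt ξ x : ℂ))

lemma norm_ee {n : ℕ} (ξ : Fin n → ℤ) (x : Fin n → ℝ) : ‖ee ξ x‖ = 1 := by
  rw [ee, mul_comm, Complex.norm_exp_ofReal_mul_I]

lemma uu_eq {n : ℕ} (S : Finset (Fin n → ℤ)) (b : (Fin n → ℤ) → ℂ) (t : ℝ) (x : Fin n → ℝ) :
    uu S (fun ξ => (b ξ).re) (fun ξ => (b ξ).im) t x =
      (∑ ξ ∈ S, ((Real.exp (-(t * om ξ)) : ℝ) : ℂ) * (b ξ * ee ξ x)).re := by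
  rw [Complex.re_sum, uu]
  refine Finset.sum_congr rfl fun ξ _ => ?_
  rw [Complex.re_ofReal_mul, Complex.mul_re, ee, mul_comm Complex.I,
    Complex.exp_ofReal_mul_I_re, Complex.exp_ofReal_mul_I_im]

lemma max_series {n : ℕ} (b : (Fin n → ℤ) → ℂ) (hb : Summable fun ξ => ‖b ξ‖) (M : ℝ)
    (hM : 0 ≤ M) (h0 : ∀ x, (∑' ξ, b ξ * ee ξ x).re ≤ M) (t : ℝ) (ht : 0 ≤ t) (x : Fin n → ℝ) :
    (∑' ξ, ((Real.exp (-(t * om ξ)) : ℝ) : ℂ) * (b ξ * ee ξ x)).re ≤ M := by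
  refine le_of_forall_pos_le_add fun ε hε => ?_
  obtain ⟨S, hS⟩ : ∃ S : Finset (Fin n → ℤ), ∑' ξ : {ξ // ξ ∉ S}, ‖b ξ‖ < ε / 2 :=
    ((tendsto_tsum_compl_atTop_zero fun ξ => ‖b ξ‖).eventually_lt_const (half_pos hε)).exists
  have h1 : ∀ y, uu S (fun ξ => (b ξ).re) (fun ξ => (b ξ).im) 0 y ≤ M + ε / 2 := fun y => by
    rw [uu_eq]
    have := tail_bound b (fun ξ => b ξ * ee ξ y) hb (fun ξ => by simp [norm_ee]) S
    simp only [zero_mul, neg_zero, Real.exp_zero, Complex.ofReal_one, one_mul]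
    linarith [(abs_le.1 this).1, h0 y]
  have h2 := max_finite S _ _ (M + ε / 2) (by positivity) h1 t ht x
  rw [uu_eq] at h2
  have := tail_bound b (fun ξ => ((Real.exp (-(t * om ξ)) : ℝ) : ℂ) * (b ξ * ee ξ x)) hb
    (fun ξ => by
      rw [norm_mul, norm_mul, norm_ee, mul_one, Complex.norm_real, Real.norm_eq_abs, Real.abs_exp]
      refine mul_le_of_le_one_left (norm_nonneg _) (Real.exp_le_one_iff.2 ?_)
      have := mul_nonneg ht (zero_le_one.trans (one_le_om ξ))
      linarith) S
  linarith [(abs_le.1 this).2]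

lemma pd_eq {n : ℕ} {f : (Fin n → ℝ) → (Fin n → ℝ)} (hf : ContDiff ℝ 1 f) (i j : Fin n)
    (x : Fin n → ℝ) : pd (fun y => f y j) i x = fderiv ℝ f x (Pi.single i 1) j := by
  have h1 : HasFDerivAt f (fderiv ℝ f x) (Function.update x i (x i)) := by
    rw [Function.update_eq_self]
    exact (hf.differentiable one_ne_zero x).hasFDerivAt
  have h2 := h1.comp_hasDerivAt (x i) (hasDerivAt_update x i (x i))
  exact (hasDerivAt_pi.1 h2 j).deriv

lemma line_deriv {n : ℕ} {f : (Fin n → ℝ) → (Fin n → ℝ)} (hf : ContDiff ℝ 1 f) (i j : Fin n)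
    (x : Fin n → ℝ) (s : ℝ) : HasDerivAt (fun s : ℝ => f (x + s • Pi.single i 1) j)
      (fderiv ℝ f (x + s • Pi.single i 1) (Pi.single i 1) j) s := by
  have h0 : HasDerivAt (fun s : ℝ => x + s • (Pi.single i 1 : Fin n → ℝ)) (Pi.single i 1) s := by
    simpa using ((hasDerivAt_id s).smul_const (Pi.single i 1 : Fin n → ℝ)).const_add x
  have h1 : HasFDerivAt f _ (x + s • Pi.single i 1) :=
    (hf.differentiable one_ne_zero _).hasFDerivAt
  exact hasDerivAt_pi.1 (h1.comp_hasDerivAt s h0) j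

lemma unif_dq {n : ℕ} {f : (Fin n → ℝ) → (Fin n → ℝ)} (hf : ContDiff ℝ 1 f)
    (hper : ∀ x (ξ : Fin n → ℤ), f (x + fun i => 2 * Real.pi * (ξ i : ℝ)) = f x)
    (ε : ℝ) (hε : 0 < ε) : ∃ δ > 0, ∀ h : ℝ, 0 < h → h < δ → ∀ x i j,
      |(f (x + h • Pi.single i 1) j - f x j) / h - pd (fun y => f y j) i x| ≤ ε := by
  have hc : Continuous (fderiv ℝ f) := hf.continuous_fderiv one_ne_zero
  have hFper : ∀ x (k : Fin n → ℤ),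
      fderiv ℝ f (x + fun i => 2 * Real.pi * (k i : ℝ)) = fderiv ℝ f x := fun x k => by
    rw [← fderiv_comp_add_right]
    congr 1
    exact funext fun y => hper y k
  have hK : IsCompact (Set.Icc (0 : Fin n → ℝ) (fun _ => 2 * Real.pi)) := isCompact_Icc
  have hu := hK.uniformContinuousAt_of_continuousAt (fderiv ℝ f) (fun a _ => hc.continuousAt)
    (Metric.dist_mem_uniformity hε)
  obtain ⟨δ, hδ, hd⟩ := Metric.mem_uniformity_dist.1 hu
  refine ⟨δ, hδ, fun h h0 h1 x i j => ?_⟩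
  obtain ⟨c, hc, hce⟩ := exists_hasDerivAt_eq_slope (fun s : ℝ => f (x + s • Pi.single i 1) j) _ h0
    (fun s _ => (line_deriv hf i j x s).continuousAt.continuousWithinAt)
    (fun s _ => line_deriv hf i j x s)
  simp only [zero_smul, add_zero, sub_zero] at hce
  rw [← hce, pd_eq hf]
  obtain ⟨k, hk⟩ := exists_per x
  have hn : ‖(Pi.single i 1 : Fin n → ℝ)‖ = 1 := by rw [Pi.norm_single]; exact norm_one
  have h3 := @hd (x + fun i => 2 * Real.pi * (k i : ℝ))
    ((x + c • Pi.single i 1) + fun i => 2 * Real.pi * (k i : ℝ)) (by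
      rw [dist_add_right, dist_comm, dist_eq_norm, add_sub_cancel_left, norm_smul, hn, mul_one,
        Real.norm_eq_abs, abs_of_pos hc.1]
      exact hc.2.trans h1) hk
  simp only [Set.mem_ofPred_eq, hFper] at h3
  rw [dist_comm, dist_eq_norm] at h3
  rw [← Pi.sub_apply, ← sub_apply, ← Real.norm_eq_abs]
  refine (norm_le_pi_norm _ j).trans ((ContinuousLinearMap.le_opNorm _ _).trans ?_)
  rw [hn, mul_one]
  exact h3.le

lemma cs2 {n : ℕ} (c d : Fin n → Fin n → ℝ) : ∑ i, ∑ j, c i j * d i j ≤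
    Real.sqrt (∑ i, ∑ j, c i j ^ 2) * Real.sqrt (∑ i, ∑ j, d i j ^ 2) := by
  have := Real.sum_mul_le_sqrt_mul_sqrt (Finset.univ : Finset (Fin n × Fin n))
    (fun p => c p.1 p.2) (fun p => d p.1 p.2)
  simpa only [Fintype.sum_prod_type] using this

lemma grad_bound {n : ℕ} (θ Ψ : (Fin n → ℝ) → (Fin n → ℝ)) (a : (Fin n → ℤ) → Fin n → ℂ)
    (τ t M : ℝ) (hτ0 : 0 ≤ τ) (hτ1 : τ ≤ 1) (ht : 0 ≤ t) (hM : 0 ≤ M)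
    (hθreg : ContDiff ℝ 1 θ) (hΨreg : ContDiff ℝ 1 Ψ)
    (hθper : ∀ x (ξ : Fin n → ℤ), θ (x + fun i => 2 * Real.pi * (ξ i : ℝ)) = θ x)
    (hθbd : ∀ x, Real.sqrt (∑ i, ∑ j, (pd (fun y => θ y j) i x) ^ 2) ≤ M)
    (hθrep : ∀ x j, HasSum (fun ξ => a ξ j * ee ξ x) (θ x j : ℂ))
    (hΨrep : ∀ x j, HasSum (fun ξ => (τ : ℂ) * ((Real.exp (-(t * om ξ)) : ℝ) : ℂ) *
      a ξ j * ee ξ x) (Ψ x j : ℂ)) (x : Fin n → ℝ) :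
    Real.sqrt (∑ i, ∑ j, (pd (fun y => Ψ y j) i x) ^ 2) ≤ M := by
  set c : Fin n → Fin n → ℝ := fun i j => pd (fun y => Ψ y j) i x with hc
  set N := Real.sqrt (∑ i, ∑ j, c i j ^ 2) with hN
  set L := ∑ i, ∑ j, |c i j| with hL
  have hL0 : 0 ≤ L := by positivity
  have hN0 : 0 ≤ N := Real.sqrt_nonneg _
  have ha : ∀ j, Summable fun ξ => ‖a ξ j‖ := fun j => by
    have := (hθrep 0 j).summable.norm
    simpa [norm_ee] using this
  -- main estimate for small h
  have main : ∀ ε > 0, ∀ᶠ h : ℝ in nhdsWithin 0 (Set.Ioi 0),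
      ∑ i, ∑ j, c i j * (h⁻¹ * (Ψ (x + h • Pi.single i 1) j - Ψ x j)) ≤ N * M + ε * L := by
    intro ε hε
    obtain ⟨δ, hδ, hd⟩ := unif_dq hθreg hθper ε hε
    filter_upwards [Ioo_mem_nhdsGT hδ] with h hh
    set b : (Fin n → ℤ) → ℂ := fun ξ => ∑ i, ∑ j, ((c i j * h⁻¹ : ℝ) : ℂ) *
      (a ξ j * (ee ξ (h • Pi.single i 1) - 1)) with hb
    have hee : ∀ (ξ : Fin n → ℤ) (y : Fin n → ℝ) (i : Fin n), ee ξ (y + h • Pi.single i 1) = ee ξ (h • Pi.single i 1) * ee ξ y := by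
      intro ξ y i
      have h0 := dt_add_single ξ 0 i h
      rw [zero_add] at h0
      have h00 : dt ξ 0 = 0 := by simp [dt]
      rw [ee, ee, ee, dt_add_single, h0, h00, ← Complex.exp_add]
      congr 1
      push_cast
      ring
    have hbs : Summable fun ξ => ‖b ξ‖ := by
      refine Summable.of_nonneg_of_le (fun _ => norm_nonneg _) (fun ξ => ?_)
        (summable_sum (s := Finset.univ) fun i _ => summable_sum (s := Finset.univ) fun j _ =>
          (ha j).mul_left (|c i j * h⁻¹| * 2))
      refine (norm_sum_le _ _).trans (Finset.sum_le_sum fun i _ => ?_)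
      refine (norm_sum_le _ _).trans (Finset.sum_le_sum fun j _ => ?_)
      rw [norm_mul, norm_mul, Complex.norm_real, Real.norm_eq_abs, mul_assoc, mul_comm ‖a ξ j‖]
      have : ‖ee ξ (h • Pi.single i 1) - 1‖ ≤ 2 := by
        refine (norm_sub_le _ _).trans ?_
        rw [norm_ee, norm_one]; norm_num
      gcongr
    have hbe : ∀ ξ y, b ξ * ee ξ y = ∑ i, ∑ j, ((c i j * h⁻¹ : ℝ) : ℂ) *
        (a ξ j * ee ξ (y + h • Pi.single i 1) - a ξ j * ee ξ y) := fun ξ y => by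
      rw [hb, Finset.sum_mul]
      refine Finset.sum_congr rfl fun i _ => ?_
      rw [Finset.sum_mul]
      refine Finset.sum_congr rfl fun j _ => ?_
      rw [hee]; ring
    have s1 : ∀ y, HasSum (fun ξ => b ξ * ee ξ y)
        (((∑ i, ∑ j, c i j * h⁻¹ * (θ (y + h • Pi.single i 1) j - θ y j) : ℝ)) : ℂ) := fun y => by
      simp only [hbe]
      push_cast
      refine hasSum_sum fun i _ => hasSum_sum fun j _ => ?_
      have := ((hθrep (y + h • Pi.single i 1) j).sub (hθrep y j)).mul_left ((c i j * h⁻¹ : ℝ) : ℂ)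
      push_cast at this
      exact this
    have s2 : HasSum (fun ξ => (τ : ℂ) * (((Real.exp (-(t * om ξ)) : ℝ) : ℂ) * (b ξ * ee ξ x)))
        (((∑ i, ∑ j, c i j * h⁻¹ * (Ψ (x + h • Pi.single i 1) j - Ψ x j) : ℝ)) : ℂ) := by
      simp only [hbe, Finset.mul_sum]
      push_cast
      refine hasSum_sum fun i _ => hasSum_sum fun j _ => ?_
      have := ((hΨrep (x + h • Pi.single i 1) j).sub (hΨrep x j)).mul_left ((c i j * h⁻¹ : ℝ) : ℂ)
      push_cast at this
      refine this.congr_fun ?_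
      intro ξ
      ring
    have b0 : 0 ≤ N * M + ε * L := by positivity
    have b1 : ∀ y, (∑' ξ, b ξ * ee ξ y).re ≤ N * M + ε * L := fun y => by
      rw [(s1 y).tsum_eq, Complex.ofReal_re]
      have q1 := cs2 c (fun i j => pd (fun z => θ z j) i y)
      have q2 : N * Real.sqrt (∑ i, ∑ j, (pd (fun z => θ z j) i y) ^ 2) ≤ N * M :=
        mul_le_mul_of_nonneg_left (hθbd y) hN0
      have q3 : ∑ i, ∑ j, c i j * h⁻¹ * (θ (y + h • Pi.single i 1) j - θ y j) ≤
          ∑ i, ∑ j, (c i j * pd (fun z => θ z j) i y + ε * |c i j|) := by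
        refine Finset.sum_le_sum fun i _ => Finset.sum_le_sum fun j _ => ?_
        have := hd h hh.1 hh.2 y i j
        have r := mul_le_mul_of_nonneg_left this (abs_nonneg (c i j))
        rw [← abs_mul] at r
        have r2 := (le_abs_self _).trans r
        rw [div_eq_inv_mul, mul_sub] at r2
        linarith
      simp only [Finset.sum_add_distrib, ← Finset.mul_sum] at q3
      linarith
    have b2 := max_series b hbs _ b0 b1 t ht x
    have b3 := s2.tsum_eq
    rw [tsum_mul_left] at b3
    have b4 := congrArg Complex.re b3
    rw [Complex.re_ofReal_mul, Complex.ofReal_re] at b4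
    simp only [← mul_assoc]
    simp only [← mul_assoc] at b4 b2
    rw [← b4]
    nlinarith
  have lim : Filter.Tendsto (fun h : ℝ =>
      ∑ i, ∑ j, c i j * (h⁻¹ * (Ψ (x + h • Pi.single i 1) j - Ψ x j)))
      (nhdsWithin 0 (Set.Ioi 0)) (nhds (∑ i, ∑ j, c i j * c i j)) := by
    refine tendsto_finsetSum _ fun i _ => tendsto_finsetSum _ fun j _ =>
      Filter.Tendsto.const_mul _ ?_
    have := (line_deriv hΨreg i j x 0).tendsto_slope_zero_right
    simp only [zero_add, zero_smul, add_zero, smul_eq_mul] at this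
    rw [hc]
    simp only
    rw [pd_eq hΨreg]
    exact this
  have fin : N ^ 2 ≤ N * M := by
    have e : N ^ 2 = ∑ i, ∑ j, c i j * c i j := by
      rw [hN, Real.sq_sqrt (by positivity)]
      simp only [sq]
    rw [e]
    refine le_of_forall_pos_le_add fun ε hε => ?_
    have := le_of_tendsto lim (main (ε / (L + 1)) (by positivity))
    refine this.trans ?_
    have : ε / (L + 1) * L ≤ ε := by
      rw [div_mul_eq_mul_div, div_le_iff₀ (by positivity)]
      nlinarith
    linarith
  by_contra hcon
  push Not at hcon
  nlinarith

lemma diffeo {n : ℕ} (Ψ : (Fin n → ℝ) → (Fin n → ℝ)) (hΨ : ContDiff ℝ 1 Ψ)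
    (hb : ∀ x, Real.sqrt (∑ i, ∑ j, (pd (fun y => Ψ y j) i x) ^ 2) ≤ 0.99) :
    Function.Bijective (fun x => x + Ψ x) ∧
      ∃ ψ : (Fin n → ℝ) → (Fin n → ℝ),
        Function.LeftInverse ψ (fun x => x + Ψ x) ∧
        Function.RightInverse ψ (fun x => x + Ψ x) ∧
        ContDiff ℝ 1 ψ := by
  let T : (EuclideanSpace ℝ (Fin n)) ≃L[ℝ] (Fin n → ℝ) := EuclideanSpace.equiv (Fin n) ℝ
  let G : (EuclideanSpace ℝ (Fin n)) → (EuclideanSpace ℝ (Fin n)) := fun y => T.symm (Ψ (T y))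
  have hG : ContDiff ℝ 1 G := T.symm.contDiff.comp (hΨ.comp T.contDiff)
  have hGd : ∀ y, HasFDerivAt G
      ((T.symm : (Fin n → ℝ) →L[ℝ] (EuclideanSpace ℝ (Fin n))).comp ((fderiv ℝ Ψ (T y)).comp (T : (EuclideanSpace ℝ (Fin n)) →L[ℝ] (Fin n → ℝ)))) y :=
    fun y => T.symm.hasFDerivAt.comp y
      ((hΨ.differentiable one_ne_zero (T y)).hasFDerivAt.comp y T.hasFDerivAt)
  have hGn : ∀ y, ‖fderiv ℝ G y‖ ≤ 0.99 := fun y => by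
    rw [(hGd y).fderiv]
    refine ContinuousLinearMap.opNorm_le_bound _ (by norm_num) fun v => ?_
    have h1 : fderiv ℝ Ψ (T y) (T v) = fun j => ∑ i, v i * pd (fun z => Ψ z j) i (T y) := by
      funext j
      have : T v = ∑ i, v i • (Pi.single i 1 : Fin n → ℝ) := by
        exact pi_eq_sum_univ' (T v)
      rw [this, map_sum]
      simp [pd_eq hΨ]
    have h2 : ‖T.symm (fderiv ℝ Ψ (T y) (T v))‖ ^ 2 ≤
        (∑ i, ∑ j, (pd (fun z => Ψ z j) i (T y)) ^ 2) * ‖v‖ ^ 2 := by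
      rw [EuclideanSpace.norm_sq_eq, EuclideanSpace.norm_sq_eq, h1, Finset.sum_comm,
        Finset.sum_mul]
      refine Finset.sum_le_sum fun j _ => ?_
      have := Finset.sum_mul_sq_le_sq_mul_sq Finset.univ (fun i => v i)
        (fun i => pd (fun z => Ψ z j) i (T y))
      simp only [Real.norm_eq_abs, sq_abs]
      rw [mul_comm]
      exact this
    have h3 := hb (T y)
    rw [Real.sqrt_le_left (by norm_num)] at h3
    refine le_of_sq_le_sq ?_ (by positivity)
    rw [mul_pow]
    exact h2.trans (by gcongr)
  have hLip : LipschitzWith 0.99 G := lipschitzWith_of_nnnorm_fderiv_le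
    (hG.differentiable one_ne_zero) fun y => by
      rw [← NNReal.coe_le_coe]; simpa using hGn y
  let F : (EuclideanSpace ℝ (Fin n)) → (EuclideanSpace ℝ (Fin n)) := fun y => y + G y
  have hF : ContDiff ℝ 1 F := contDiff_id.add hG
  have happ : ApproximatesLinearOn F ((ContinuousLinearEquiv.refl ℝ (EuclideanSpace ℝ (Fin n)) : (EuclideanSpace ℝ (Fin n)) ≃L[ℝ] (EuclideanSpace ℝ (Fin n))) : (EuclideanSpace ℝ (Fin n)) →L[ℝ] (EuclideanSpace ℝ (Fin n)))
      Set.univ 0.99 := fun x _ y _ => by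
    have := hLip.dist_le_mul x y
    rw [dist_eq_norm, dist_eq_norm] at this
    have e : F x - F y - (x - y) = G x - G y := by
      change (x + G x) - (y + G y) - (x - y) = G x - G y
      abel
    rw [← e] at this
    exact this
  have hsub : Subsingleton (EuclideanSpace ℝ (Fin n)) ∨ (0.99 : NNReal) <
      ‖((ContinuousLinearEquiv.refl ℝ (EuclideanSpace ℝ (Fin n))).symm : (EuclideanSpace ℝ (Fin n)) →L[ℝ] (EuclideanSpace ℝ (Fin n)))‖₊⁻¹ := by
    rcases subsingleton_or_nontrivial (EuclideanSpace ℝ (Fin n)) with h | h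
    · exact Or.inl h
    · right
      have : ‖((ContinuousLinearEquiv.refl ℝ (EuclideanSpace ℝ (Fin n))).symm : (EuclideanSpace ℝ (Fin n)) →L[ℝ] (EuclideanSpace ℝ (Fin n)))‖₊ = 1 := by
        rw [← NNReal.coe_inj]; exact ContinuousLinearMap.norm_id
      rw [this, inv_one, ← NNReal.coe_lt_coe]
      norm_num
  let H : (EuclideanSpace ℝ (Fin n)) ≃ₜ (EuclideanSpace ℝ (Fin n)) := happ.toHomeomorph F hsub
  have hHF : ∀ y, H y = F y := fun y => rfl
  have hsymm : ContDiff ℝ 1 H.symm := by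
    refine H.contDiff_symm (f₀' := fun y => ContinuousLinearEquiv.ofUnit
      (Units.oneSub (-(fderiv ℝ G y)) (by rw [norm_neg]; exact (hGn y).trans_lt (by norm_num))))
      (fun y => ?_) hF
    have h1 : HasFDerivAt F (ContinuousLinearMap.id ℝ (EuclideanSpace ℝ (Fin n)) + fderiv ℝ G y) y :=
      (hasFDerivAt_id y).add (hG.differentiable one_ne_zero y).hasFDerivAt
    refine h1.congr_fderiv ?_
    ext1 v
    simp [ContinuousLinearEquiv.ofUnit]
  have key : ∀ x, T (F (T.symm x)) = x + Ψ x := fun x => by simp [F, G]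
  have hl : Function.LeftInverse (fun z => T (H.symm (T.symm z))) (fun x => x + Ψ x) := fun x => by
    simp only
    rw [← key, T.symm_apply_apply, ← hHF, H.symm_apply_apply, T.apply_symm_apply]
  have hr : Function.RightInverse (fun z => T (H.symm (T.symm z))) (fun x => x + Ψ x) := fun x => by
    simp only
    rw [← key, T.symm_apply_apply, ← hHF, H.apply_symm_apply, T.apply_symm_apply]
  exact ⟨⟨hl.injective, hr.surjective⟩, _, hl, hr,
    T.contDiff.comp (hsymm.comp T.symm.contDiff)⟩


/-- For θ : 𝕋ⁿ → ℝⁿ of class C¹ with Hilbert–Schmidt Jacobian norm ≤ 0.99, the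
deformation Θ(τ,x) = τ e^{−(1−τ)⟨D⟩}θ(x) (given here through its Fourier series
representation) satisfies the same Jacobian bound for every τ ∈ [0,1], and
consequently x ↦ x + Θ(τ,x) is a C¹ diffeomorphism. -/
theorem stmt8 (n : ℕ) (θ : (Fin n → ℝ) → (Fin n → ℝ))
    (a : (Fin n → ℤ) → Fin n → ℂ)
    (Θ : ℝ → (Fin n → ℝ) → (Fin n → ℝ))
    (hθreg : ContDiff ℝ 1 θ)
    (hθper : ∀ x (ξ : Fin n → ℤ), θ (x + fun i => 2 * Real.pi * (ξ i : ℝ)) = θ x)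
    (hθbd : ∀ x, Real.sqrt (∑ i, ∑ j, (pd (fun y => θ y j) i x) ^ 2) ≤ 0.99)
    (hθrep : ∀ x j, HasSum (fun ξ : Fin n → ℤ =>
      a ξ j * Complex.exp (Complex.I * ((∑ i, (ξ i : ℝ) * x i : ℝ) : ℂ))) ((θ x j : ℂ)))
    (hΘrep : ∀ τ ∈ Set.Icc (0:ℝ) 1, ∀ x j, HasSum (fun ξ : Fin n → ℤ =>
      ((τ : ℂ) *
        Complex.exp (-(((1 - τ) * Real.sqrt (1 + ∑ i, ((ξ i : ℝ)) ^ 2) : ℝ) : ℂ))) *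
        a ξ j * Complex.exp (Complex.I * ((∑ i, (ξ i : ℝ) * x i : ℝ) : ℂ)))
      ((Θ τ x j : ℂ)))
    (hΘreg : ∀ τ ∈ Set.Icc (0:ℝ) 1, ContDiff ℝ 1 (Θ τ)) :
    ∀ τ ∈ Set.Icc (0:ℝ) 1,
      (∀ x, Real.sqrt (∑ i, ∑ j, (pd (fun y => Θ τ y j) i x) ^ 2) ≤
        ⨆ x' : Fin n → ℝ, Real.sqrt (∑ i, ∑ j, (pd (fun y => θ y j) i x') ^ 2)) ∧
      (∀ x, Real.sqrt (∑ i, ∑ j, (pd (fun y => Θ τ y j) i x) ^ 2) ≤ 0.99) ∧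
      Function.Bijective (fun x => x + Θ τ x) ∧
      ∃ ψ : (Fin n → ℝ) → (Fin n → ℝ),
        Function.LeftInverse ψ (fun x => x + Θ τ x) ∧
        Function.RightInverse ψ (fun x => x + Θ τ x) ∧
        ContDiff ℝ 1 ψ := by
  intro τ hτ
  have hbdd : BddAbove (Set.range fun x' : Fin n → ℝ =>
      Real.sqrt (∑ i, ∑ j, (pd (fun y => θ y j) i x') ^ 2)) := by
    refine ⟨0.99, ?_⟩
    rintro _ ⟨x, rfl⟩
    exact hθbd x
  have h1 : ∀ M : ℝ, 0 ≤ M →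
      (∀ x, Real.sqrt (∑ i, ∑ j, (pd (fun y => θ y j) i x) ^ 2) ≤ M) →
      ∀ x, Real.sqrt (∑ i, ∑ j, (pd (fun y => Θ τ y j) i x) ^ 2) ≤ M := by
    intro M hM hb
    refine grad_bound θ (Θ τ) a τ (1 - τ) M hτ.1 hτ.2 (by linarith [hτ.2]) hM hθreg
      (hΘreg τ hτ) hθper hb hθrep ?_
    intro x j
    have := hΘrep τ hτ x j
    refine this.congr_fun ?_
    intro ξ
    simp only [ee, dt, om]
    push_cast
    rfl
  have h2 := h1 0.99 (by norm_num) hθbd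
  obtain ⟨h3, h4⟩ := diffeo (Θ τ) (hΘreg τ hτ) h2
  exact ⟨h1 _ (Real.iSup_nonneg fun _ => Real.sqrt_nonneg _) (fun x => le_ciSup hbdd x),
    h2, h3, h4⟩
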